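/- arXiv:2504.04952 — 2 statements merged into one kernel-verified Lean document; each statement's English description precedes it below -/
import Mathlib

section
/- Let ζ : (0,∞) → ℝ be continuous with bounded support and define 𝒯ζ(s) = √(1+s²) ζ(s) + ∫_s^∞ t ζ(t)/√(1+t²) dt for s > 0. Then for every integer l ≥ 1 the l-fold iterate satisfies 𝒯^l ζ(s) = (1+s²)^{l/2} ζ(s) + l ∫_s^∞ t (1+t²)^{l/2−1} ζ(t) dt for every s > 0. -/
open MeasureTheory Filter Set

/-- A function `ζ : (0,∞) → ℝ` (modeled as `ℝ → ℝ`, values on nonpositive reals irrelevant)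
has bounded support. -/
def BddSupp (ζ : ℝ → ℝ) : Prop := ∃ R : ℝ, ∀ s, R ≤ s → ζ s = 0

/-- The transform `𝒯ζ(s) = √(1+s²) ζ(s) + ∫_s^∞ t ζ(t)/√(1+t²) dt`. -/
noncomputable def Tcal (ζ : ℝ → ℝ) : ℝ → ℝ :=
  fun s => Real.sqrt (1 + s ^ 2) * ζ s + ∫ t in Set.Ioi s, t * ζ t / Real.sqrt (1 + t ^ 2)

/-!
For a weight `w` put `T_w ζ(s) = w(s) ζ(s) + ∫_s^∞ w' ζ`. When `ζ` is differentiable,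
`(T_w ζ)' = w ζ'`, so differentiation conjugates `T_w` to multiplication by `w`, which suggests
`T_φ ∘ T_ψ = T_{φψ}`. For continuous `ζ` this identity is an integration by parts. The transform
`𝒯` is `T_w` for `w(s) = √(1+s²)`, so `𝒯^l = T_{w^l}`.
-/

section TailIntegral

variable {E : Type*} [NormedAddCommGroup E] {f : ℝ → E} {a s : ℝ}

lemma integrableOn_Ioi_of_eventuallyEq_zero (hf : ContinuousOn f (Ioi a)) (hf₀ : f =ᶠ[atTop] 0)
    (hs : a < s) : IntegrableOn f (Ioi s) := by
  have hloc : LocallyIntegrableOn f (Ici s) :=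
    (hf.mono (Ici_subset_Ioi.2 hs)).locallyIntegrableOn measurableSet_Ici
  have hzero : IntegrableAtFilter (0 : ℝ → E) atTop := ⟨univ, univ_mem, integrableOn_zero⟩
  exact (hloc.integrableOn_of_isBigO_atTop hf₀.isBigO hzero).mono_set Ioi_subset_Ici_self

variable [NormedSpace ℝ E]

lemma integral_Ioi_eventuallyEq_zero (hf₀ : f =ᶠ[atTop] 0) :
    (fun t => ∫ x in Ioi t, f x) =ᶠ[atTop] 0 := by
  filter_upwards [eventually_forall_ge_atTop.2 hf₀] with t ht
  exact setIntegral_eq_zero_of_forall_eq_zero fun x hx => ht x (le_of_lt hx)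

variable [CompleteSpace E]

lemma hasDerivAt_integral_Ioi (hf : IntegrableOn f (Ioi a)) (has : a < s)
    (hfs : ContinuousAt f s) : HasDerivAt (fun t => ∫ x in Ioi t, f x) (-f s) s := by
  have hint {t : ℝ} (ht : a < t) : IntegrableOn f (Ioi t) := hf.mono_set (Ioi_subset_Ioi ht.le)
  have hprim : HasDerivAt (fun t => ∫ x in s..t, f x) (f s) s :=
    intervalIntegral.integral_hasDerivAt_right IntervalIntegrable.refl
      ⟨Ioi a, Ioi_mem_nhds has, hf.aestronglyMeasurable⟩ hfs
  refine (hprim.const_sub (∫ x in Ioi s, f x)).congr_of_eventuallyEq ?_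
  filter_upwards [Ioi_mem_nhds has] with t ht
  rw [← intervalIntegral.integral_Ioi_sub_Ioi' (hint has) (hint ht), sub_sub_cancel]

lemma hasDerivAt_integral_Ioi_of_eventuallyEq_zero (hf : ContinuousOn f (Ioi a))
    (hf₀ : f =ᶠ[atTop] 0) (hs : a < s) :
    HasDerivAt (fun t => ∫ x in Ioi t, f x) (-f s) s := by
  obtain ⟨b, hab, hbs⟩ := exists_between hs
  exact hasDerivAt_integral_Ioi (integrableOn_Ioi_of_eventuallyEq_zero hf hf₀ hab) hbs
    (hf.continuousAt (Ioi_mem_nhds hs))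

lemma continuousOn_integral_Ioi_of_eventuallyEq_zero (hf : ContinuousOn f (Ioi a))
    (hf₀ : f =ᶠ[atTop] 0) : ContinuousOn (fun t => ∫ x in Ioi t, f x) (Ioi a) := fun _ ht =>
  (hasDerivAt_integral_Ioi_of_eventuallyEq_zero hf hf₀ ht).continuousAt.continuousWithinAt

end TailIntegral

section WeightedTailIntegral

variable {E : Type*} [NormedAddCommGroup E] [NormedSpace ℝ E] {f : ℝ → E} {w φ ψ : ℝ → ℝ}
  {a s : ℝ}

lemma integrableOn_Ioi_smul_of_eventuallyEq_zero (hw : ContinuousOn w (Ioi a))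
    (hf : ContinuousOn f (Ioi a)) (hf₀ : f =ᶠ[atTop] 0) (hs : a < s) :
    IntegrableOn (fun t => w t • f t) (Ioi s) :=
  integrableOn_Ioi_of_eventuallyEq_zero (hw.fun_smul hf) (hf₀.mono fun t ht => by simp [ht]) hs

lemma integral_Ioi_deriv_mul_smul (hφ : ContDiffOn ℝ 1 φ (Ioi a)) (hψ : ContDiffOn ℝ 1 ψ (Ioi a))
    (hf : ContinuousOn f (Ioi a)) (hf₀ : f =ᶠ[atTop] 0) (hs : a < s) :
    ∫ t in Ioi s, deriv (φ * ψ) t • f t =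
      (∫ t in Ioi s, (deriv φ t * ψ t) • f t) + ∫ t in Ioi s, (φ t * deriv ψ t) • f t := by
  have hφ' := hφ.continuousOn_deriv_of_isOpen isOpen_Ioi le_rfl
  have hψ' := hψ.continuousOn_deriv_of_isOpen isOpen_Ioi le_rfl
  rw [← integral_add
    (integrableOn_Ioi_smul_of_eventuallyEq_zero (hφ'.fun_mul hψ.continuousOn) hf hf₀ hs)
    (integrableOn_Ioi_smul_of_eventuallyEq_zero (hφ.continuousOn.fun_mul hψ') hf hf₀ hs)]
  refine setIntegral_congr_fun measurableSet_Ioi fun t ht => ?_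
  have hdiff {u : ℝ → ℝ} (hu : ContDiffOn ℝ 1 u (Ioi a)) : DifferentiableAt ℝ u t :=
    (hu.differentiableOn one_ne_zero).differentiableAt (Ioi_mem_nhds (hs.trans ht))
  simp only [deriv_mul (hdiff hφ) (hdiff hψ), add_smul]

variable [CompleteSpace E]

lemma integrableOn_deriv_smul_integral_Ioi (hw : ContDiffOn ℝ 1 w (Ioi a))
    (hf : ContinuousOn f (Ioi a)) (hf₀ : f =ᶠ[atTop] 0) (hs : a < s) :
    IntegrableOn (fun t => deriv w t • ∫ x in Ioi t, f x) (Ioi s) :=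
  integrableOn_Ioi_smul_of_eventuallyEq_zero (hw.continuousOn_deriv_of_isOpen isOpen_Ioi le_rfl)
    (continuousOn_integral_Ioi_of_eventuallyEq_zero hf hf₀) (integral_Ioi_eventuallyEq_zero hf₀) hs

lemma integral_Ioi_deriv_smul_integral_Ioi (hw : ContDiffOn ℝ 1 w (Ioi a))
    (hf : ContinuousOn f (Ioi a)) (hf₀ : f =ᶠ[atTop] 0) (hs : a < s) :
    ∫ t in Ioi s, deriv w t • ∫ x in Ioi t, f x =
      (∫ t in Ioi s, w t • f t) - w s • ∫ x in Ioi s, f x := by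
  have hderiv : ∀ t ∈ Ici s, HasDerivAt (fun t => w t • ∫ x in Ioi t, f x)
      (deriv w t • (∫ x in Ioi t, f x) - w t • f t) t := fun t ht => by
    have hat : a < t := hs.trans_le ht
    have hwt : HasDerivAt w (deriv w t) t :=
      ((hw.differentiableOn one_ne_zero).differentiableAt (Ioi_mem_nhds hat)).hasDerivAt
    simpa only [smul_neg, neg_add_eq_sub] using
      hwt.fun_smul (hasDerivAt_integral_Ioi_of_eventuallyEq_zero hf hf₀ hat)
  have hint_tail := integrableOn_deriv_smul_integral_Ioi hw hf hf₀ hs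
  have hint_smul := integrableOn_Ioi_smul_of_eventuallyEq_zero hw.continuousOn hf hf₀ hs
  have hlim : Tendsto (fun t => w t • ∫ x in Ioi t, f x) atTop (nhds 0) :=
    tendsto_const_nhds.congr' <| (integral_Ioi_eventuallyEq_zero hf₀).mono fun t ht => by simp [ht]
  have hparts := integral_Ioi_of_hasDerivAt_of_tendsto' hderiv (hint_tail.sub hint_smul) hlim
  rw [integral_sub hint_tail hint_smul, zero_sub] at hparts
  rw [sub_eq_neg_add, ← hparts, sub_add_cancel]

end WeightedTailIntegral

section TailTransform

variable {E : Type*} [NormedAddCommGroup E] [NormedSpace ℝ E] {ζ ξ : ℝ → E} {φ ψ w : ℝ → ℝ}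
  {a s : ℝ}

/-- The operator `ζ ↦ w ζ + ∫_s^∞ w' ζ` with weight `w`, of which `Tcal` is the case
`w(s) = √(1+s²)`. The derivative of the weight is encoded as `deriv w`, which is meaningful only
where `w` is differentiable. -/
noncomputable def tailTransform (w : ℝ → ℝ) (ζ : ℝ → E) (s : ℝ) : E :=
  w s • ζ s + ∫ t in Ioi s, deriv w t • ζ t

lemma tailTransform_one (ζ : ℝ → E) : tailTransform 1 ζ = ζ := by
  ext s
  simp [tailTransform]

lemma eqOn_tailTransform (h : EqOn ζ ξ (Ioi a)) (w : ℝ → ℝ) :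
    EqOn (tailTransform w ζ) (tailTransform w ξ) (Ioi a) := by
  intro s hs
  have htail : ∫ t in Ioi s, deriv w t • ζ t = ∫ t in Ioi s, deriv w t • ξ t :=
    setIntegral_congr_fun measurableSet_Ioi fun t ht => by
      simp only [h (Ioi_subset_Ioi (le_of_lt hs) ht)]
  simp only [tailTransform, h hs, htail]

variable [CompleteSpace E]

theorem tailTransform_tailTransform (hφ : ContDiffOn ℝ 1 φ (Ioi a))
    (hψ : ContDiffOn ℝ 1 ψ (Ioi a)) (hζ : ContinuousOn ζ (Ioi a)) (hζ₀ : ζ =ᶠ[atTop] 0)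
    (hs : a < s) : tailTransform φ (tailTransform ψ ζ) s = tailTransform (φ * ψ) ζ s := by
  have hφ' := hφ.continuousOn_deriv_of_isOpen isOpen_Ioi le_rfl
  have hg : ContinuousOn (fun t => deriv ψ t • ζ t) (Ioi a) :=
    (hψ.continuousOn_deriv_of_isOpen isOpen_Ioi le_rfl).fun_smul hζ
  have hg₀ : (fun t => deriv ψ t • ζ t) =ᶠ[atTop] 0 := hζ₀.mono fun t ht => by simp [ht]
  have hsplit : ∫ t in Ioi s, deriv φ t • tailTransform ψ ζ t =
      (∫ t in Ioi s, (deriv φ t * ψ t) • ζ t) +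
        ∫ t in Ioi s, deriv φ t • ∫ x in Ioi t, deriv ψ x • ζ x := by
    rw [← integral_add
      (integrableOn_Ioi_smul_of_eventuallyEq_zero (hφ'.fun_mul hψ.continuousOn) hζ hζ₀ hs)
      (integrableOn_deriv_smul_integral_Ioi hφ hg hg₀ hs)]
    simp only [tailTransform, smul_add, mul_smul]
  calc tailTransform φ (tailTransform ψ ζ) s
      = φ s • (ψ s • ζ s + ∫ t in Ioi s, deriv ψ t • ζ t) +
          ((∫ t in Ioi s, (deriv φ t * ψ t) • ζ t) +
            ((∫ t in Ioi s, φ t • deriv ψ t • ζ t) - φ s • ∫ t in Ioi s, deriv ψ t • ζ t)) := by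
        rw [← integral_Ioi_deriv_smul_integral_Ioi hφ hg hg₀ hs, ← hsplit]
        rfl
    _ = (φ s * ψ s) • ζ s + ((∫ t in Ioi s, (deriv φ t * ψ t) • ζ t) +
          ∫ t in Ioi s, (φ t * deriv ψ t) • ζ t) := by
        simp only [smul_add, mul_smul]
        abel
    _ = tailTransform (φ * ψ) ζ s := by
        rw [← integral_Ioi_deriv_mul_smul hφ hψ hζ hζ₀ hs, tailTransform, Pi.mul_apply]

theorem eqOn_iterate_tailTransform (hw : ContDiffOn ℝ 1 w (Ioi a)) (hζ : ContinuousOn ζ (Ioi a))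
    (hζ₀ : ζ =ᶠ[atTop] 0) (l : ℕ) :
    EqOn ((tailTransform w)^[l] ζ) (tailTransform (w ^ l) ζ) (Ioi a) := by
  induction l with
  | zero => simp [tailTransform_one, EqOn]
  | succ l ih =>
    intro s hs
    have hwl : ContDiffOn ℝ 1 (w ^ l) (Ioi a) := hw.pow l
    rw [Function.iterate_succ_apply', eqOn_tailTransform ih w hs,
      tailTransform_tailTransform hw hwl hζ hζ₀ hs, pow_succ']

end TailTransform

lemma contDiff_sqrt_one_add_sq {n : WithTop ℕ∞} : ContDiff ℝ n fun t : ℝ => √(1 + t ^ 2) :=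
  (contDiff_const.add (contDiff_id.pow 2)).sqrt fun t => by positivity

lemma hasDerivAt_one_add_sq (t : ℝ) : HasDerivAt (fun t : ℝ => 1 + t ^ 2) (2 * t) t := by
  simpa using (hasDerivAt_pow 2 t).const_add 1

lemma deriv_one_add_sq_rpow (p t : ℝ) :
    deriv (fun t : ℝ => (1 + t ^ 2) ^ p) t = 2 * p * (t * (1 + t ^ 2) ^ (p - 1)) := by
  rw [((hasDerivAt_one_add_sq t).rpow_const (p := p) (Or.inl (by positivity))).deriv]
  ring

lemma deriv_sqrt_one_add_sq (t : ℝ) :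
    deriv (fun t : ℝ => √(1 + t ^ 2)) t = t / √(1 + t ^ 2) := by
  rw [((hasDerivAt_one_add_sq t).sqrt (by positivity)).deriv, mul_div_mul_left _ _ two_ne_zero]

lemma Tcal_eq_tailTransform : Tcal = tailTransform fun t => √(1 + t ^ 2) := by
  ext ζ s
  simp only [Tcal, tailTransform, deriv_sqrt_one_add_sq, smul_eq_mul, div_mul_eq_mul_div]

lemma sqrt_one_add_sq_pow (l : ℕ) :
    (fun t : ℝ => √(1 + t ^ 2)) ^ l = fun t : ℝ => (1 + t ^ 2) ^ ((l : ℝ) / 2) := by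
  ext t
  rw [Pi.pow_apply, Real.rpow_div_two_eq_sqrt _ (by positivity), Real.rpow_natCast]

theorem stmt3 (ζ : ℝ → ℝ) (hc : ContinuousOn ζ (Set.Ioi 0)) (hb : BddSupp ζ)
    (l : ℕ) (hl : 1 ≤ l) (s : ℝ) (hs : 0 < s) :
    Tcal^[l] ζ s =
      (1 + s ^ 2) ^ ((l : ℝ) / 2) * ζ s +
        l * ∫ t in Set.Ioi s, t * (1 + t ^ 2) ^ ((l : ℝ) / 2 - 1) * ζ t := by
  have hζ₀ : ζ =ᶠ[atTop] 0 := eventually_atTop.2 hb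
  rw [Tcal_eq_tailTransform,
    eqOn_iterate_tailTransform contDiff_sqrt_one_add_sq.contDiffOn hc hζ₀ l hs,
    sqrt_one_add_sq_pow]
  simp only [tailTransform, deriv_one_add_sq_rpow, smul_eq_mul, mul_assoc, integral_const_mul]
  ring
end

section
/- Let n ≥ 2 and let ξ : ℝ^n → ℝ^n be continuous with compact support. Then ξ satisfies ξ(ϑx) = ϑ ξ(x) for every ϑ ∈ O(n) and every x ∈ ℝ^n \ {0}, if and only if there exists α ∈ T_n^n such that ξ(x) = α(|x|) x for every x ∈ ℝ^n \ {0}. -/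
open MeasureTheory Filter Set

/-- `ζ ∈ T_j^n`: continuous on `(0,∞)` with bounded support and
`lim_{s → 0⁺} s^(n-j+1) ζ(s) = 0`. -/
def MemT (n j : ℕ) (ζ : ℝ → ℝ) : Prop :=
  ContinuousOn ζ (Set.Ioi 0) ∧ BddSupp ζ ∧
    Tendsto (fun s => s ^ (n - j + 1) * ζ s) (nhdsWithin 0 (Set.Ioi 0)) (nhds 0)

/-!
The reflection in the line `ℝ x` fixes `x`, so an equivariant `ξ` satisfies `ξ x ∈ ℝ x`. Any two
vectors of equal norm are exchanged by a reflection, so the factor of proportionality depends only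
on `‖x‖` and can be read off along a single ray `s ↦ s • e`. The limit condition on this factor
is `ξ 0 = 0`, which follows by continuity from the equivariance under `x ↦ -x`.
-/

open Bornology Function
open scoped Topology

theorem bddSupp_iff_eventually_atTop {ζ : ℝ → ℝ} : BddSupp ζ ↔ ∀ᶠ s in atTop, ζ s = 0 :=
  eventually_atTop.symm

theorem memT_self_iff {n : ℕ} {ζ : ℝ → ℝ} :
    MemT n n ζ ↔
      ContinuousOn ζ (Ioi 0) ∧ BddSupp ζ ∧ Tendsto (fun s => s * ζ s) (𝓝[>] 0) (𝓝 0) := by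
  simp only [MemT, Nat.sub_self, zero_add, pow_one]

theorem map_zero_of_continuousAt_of_map_neg {X G : Type*}
    [TopologicalSpace X] [NegZeroClass X] [ContinuousNeg X] [(𝓝[≠] (0 : X)).NeBot]
    [TopologicalSpace G] [T2Space G] [AddGroup G] [ContinuousNeg G] [IsAddTorsionFree G]
    {f : X → G} (hf : ContinuousAt f 0) (hneg : ∀ x ≠ 0, f (-x) = -f x) : f 0 = 0 := by
  have hleft : Tendsto (fun x => f (-x)) (𝓝[≠] 0) (𝓝 (f 0)) :=
    (hf.tendsto.comp (continuous_neg.tendsto' 0 0 neg_zero)).mono_left nhdsWithin_le_nhds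
  have hright : Tendsto (fun x => -f x) (𝓝[≠] 0) (𝓝 (-f 0)) :=
    hf.tendsto.neg.mono_left nhdsWithin_le_nhds
  have hself : f 0 = -f 0 :=
    tendsto_nhds_unique_of_eventuallyEq hleft hright (eventually_mem_nhdsWithin.mono hneg)
  exact self_eq_neg.1 hself

theorem tendsto_smul_const_cobounded {𝕜 E : Type*} [NormedField 𝕜] [NormedAddCommGroup E]
    [NormedSpace 𝕜 E] {e : E} (he : e ≠ 0) :
    Tendsto (fun c : 𝕜 => c • e) (cobounded 𝕜) (cobounded E) := by
  rw [← tendsto_norm_atTop_iff_cobounded]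
  simp only [norm_smul]
  exact tendsto_norm_cobounded_atTop.atTop_mul_const (norm_pos_iff.2 he)

section

variable {E : Type*} [NormedAddCommGroup E] [InnerProductSpace ℝ E] {ξ : E → E} {e x y : E}
  {c s : ℝ}

/-- Equivariance of a vector field under the orthogonal group of `E`, i.e. the linear isometric
automorphisms of `E`, required only away from the origin. -/
def IsOrthogonallyEquivariant (ξ : E → E) : Prop :=
  ∀ ϑ : E ≃ₗᵢ[ℝ] E, ∀ x : E, x ≠ 0 → ξ (ϑ x) = ϑ (ξ x)

/-- The radial profile of `ξ` along the ray spanned by `e`: the function `α` for which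
`ξ x = α ‖x‖ • x` when `ξ` is equivariant and `e` is a unit vector. Its value at `0` is the junk
value `0`. -/
noncomputable def radialProfile (ξ : E → E) (e : E) (s : ℝ) : ℝ :=
  inner ℝ (ξ (s • e)) e / s

namespace IsOrthogonallyEquivariant

theorem of_radial {α : ℝ → ℝ} (hα : ∀ x : E, x ≠ 0 → ξ x = α ‖x‖ • x) :
    IsOrthogonallyEquivariant ξ := fun ϑ x hx => by
  rw [hα x hx, hα (ϑ x) (ϑ.map_eq_zero_iff.not.2 hx), ϑ.norm_map, map_smul]

theorem map_neg (h : IsOrthogonallyEquivariant ξ) (hx : x ≠ 0) : ξ (-x) = -ξ x :=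
  h (LinearIsometryEquiv.neg ℝ) x hx

theorem map_zero [Nontrivial E] (h : IsOrthogonallyEquivariant ξ) (hc : ContinuousAt ξ 0) :
    ξ 0 = 0 := by
  have := Module.punctured_nhds_neBot ℝ E (0 : E)
  have : IsAddTorsionFree E := .of_isTorsionFree ℝ E
  exact map_zero_of_continuousAt_of_map_neg hc fun _ => h.map_neg

theorem mem_span_singleton (h : IsOrthogonallyEquivariant ξ) (hx : x ≠ 0) :
    ξ x ∈ Submodule.span ℝ {x} := by
  rw [← Submodule.reflection_eq_self_iff, ← h _ x hx,
    Submodule.reflection_mem_subspace_eq_self (Submodule.mem_span_singleton_self x)]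

theorem eq_smul_of_norm_eq (h : IsOrthogonallyEquivariant ξ) (hy : y ≠ 0) (hξ : ξ y = c • y)
    (hnorm : ‖y‖ = ‖x‖) : ξ x = c • x := by
  have hyx := Submodule.reflection_sub hnorm
  have heq := h (Submodule.reflection (Submodule.span ℝ {y - x})ᗮ) y hy
  rwa [hξ, map_smul, hyx] at heq

theorem apply_smul_eq_radialProfile_smul (h : IsOrthogonallyEquivariant ξ) (he : ‖e‖ = 1)
    (hs : s ≠ 0) : ξ (s • e) = radialProfile ξ e s • s • e := by
  have hse : s • e ≠ 0 := smul_ne_zero hs (norm_ne_zero_iff.1 (he ▸ one_ne_zero))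
  obtain ⟨c, hc⟩ := Submodule.mem_span_singleton.1 (h.mem_span_singleton hse)
  have hprofile : radialProfile ξ e s = c := by
    simp [radialProfile, ← hc, real_inner_smul_left, he, hs]
  rw [hprofile, hc]

theorem eq_radialProfile_smul (h : IsOrthogonallyEquivariant ξ) (he : ‖e‖ = 1) (hx : x ≠ 0) :
    ξ x = radialProfile ξ e ‖x‖ • x := by
  have hx' : ‖x‖ ≠ 0 := norm_ne_zero_iff.2 hx
  have he' : e ≠ 0 := norm_ne_zero_iff.1 (he ▸ one_ne_zero)
  exact h.eq_smul_of_norm_eq (smul_ne_zero hx' he') (h.apply_smul_eq_radialProfile_smul he hx')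
    (by rw [norm_smul, norm_norm, he, mul_one])

end IsOrthogonallyEquivariant

theorem continuousOn_radialProfile (hc : Continuous ξ) (e : E) :
    ContinuousOn (radialProfile ξ e) {0}ᶜ :=
  ContinuousOn.div (by fun_prop) continuousOn_id fun _ hs => hs

theorem bddSupp_radialProfile (hb : IsBounded (support ξ)) (he : e ≠ 0) :
    BddSupp (radialProfile ξ e) := by
  have hξ : ∀ᶠ x in cobounded E, ξ x = 0 := by
    filter_upwards [isBounded_def.1 hb] with x hx using notMem_support.1 hx
  have hray : Tendsto (fun s : ℝ => s • e) atTop (cobounded E) :=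
    (tendsto_smul_const_cobounded he).mono_left IsOrderBornology.atTop_le_cobounded
  rw [bddSupp_iff_eventually_atTop]
  filter_upwards [hray.eventually hξ] with s hs
  rw [radialProfile, hs, inner_zero_left, zero_div]

theorem tendsto_mul_radialProfile (hc : ContinuousAt ξ 0) (h0 : ξ 0 = 0) (e : E) :
    Tendsto (fun s => s * radialProfile ξ e s) (𝓝[≠] 0) (𝓝 0) := by
  have hray : Tendsto (fun s : ℝ => ξ (s • e)) (𝓝 0) (𝓝 0) :=
    h0 ▸ hc.tendsto.comp ((continuous_id.smul continuous_const).tendsto' 0 0 (zero_smul ℝ e))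
  have hinner : Tendsto (fun s : ℝ => inner ℝ (ξ (s • e)) e) (𝓝 0) (𝓝 0) := by
    simpa only [inner_zero_left] using hray.inner (tendsto_const_nhds (x := e))
  refine (hinner.mono_left nhdsWithin_le_nhds).congr' ?_
  filter_upwards [self_mem_nhdsWithin] with s hs using (mul_div_cancel₀ _ hs).symm

theorem memT_radialProfile (n : ℕ) (hc : Continuous ξ) (hb : IsBounded (support ξ)) (h0 : ξ 0 = 0)
    (he : e ≠ 0) : MemT n n (radialProfile ξ e) :=
  memT_self_iff.2 ⟨(continuousOn_radialProfile hc e).mono fun _ hs => ne_of_gt hs,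
    bddSupp_radialProfile hb he,
    (tendsto_mul_radialProfile hc.continuousAt h0 e).mono_left <|
      nhdsWithin_mono 0 fun _ hs => ne_of_gt hs⟩

theorem stmt10_general [Nontrivial E] (n : ℕ) (hc : Continuous ξ) (hb : IsBounded (support ξ)) :
    IsOrthogonallyEquivariant ξ ↔
      ∃ α : ℝ → ℝ, MemT n n α ∧ ∀ x : E, x ≠ 0 → ξ x = α ‖x‖ • x := by
  constructor
  · intro h
    obtain ⟨e, he⟩ := exists_norm_eq E zero_le_one
    have he' : e ≠ 0 := norm_ne_zero_iff.1 (he ▸ one_ne_zero)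
    exact ⟨radialProfile ξ e, memT_radialProfile n hc hb (h.map_zero hc.continuousAt) he',
      fun _ => h.eq_radialProfile_smul he⟩
  · rintro ⟨α, -, hα⟩
    exact .of_radial hα

end

/-- For `n ≥ 2`, a continuous `ξ : ℝⁿ → ℝⁿ` with compact support commutes with all
orthogonal maps (linear isometries) on `ℝⁿ \ {0}` if and only if
`ξ(x) = α(|x|) x` for some `α ∈ T_n^n`. -/
theorem stmt10 (n : ℕ) (hn : 2 ≤ n)
    (ξ : EuclideanSpace ℝ (Fin n) → EuclideanSpace ℝ (Fin n))
    (hc : Continuous ξ) (hs : HasCompactSupport ξ) :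
    (∀ ϑ : EuclideanSpace ℝ (Fin n) ≃ₗᵢ[ℝ] EuclideanSpace ℝ (Fin n),
        ∀ x : EuclideanSpace ℝ (Fin n), x ≠ 0 → ξ (ϑ x) = ϑ (ξ x)) ↔
      ∃ α : ℝ → ℝ, MemT n n α ∧
        ∀ x : EuclideanSpace ℝ (Fin n), x ≠ 0 → ξ x = α ‖x‖ • x := by
  have : NeZero n := ⟨by lia⟩
  exact stmt10_general n hc (hs.isCompact.isBounded.subset (subset_tsupport ξ))
end
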